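/- Let g be a finite-dimensional complex semisimple Lie algebra with simple ideals g_1, …, g_n, λ ∈ ℂ^n, and let s be a complex simple Lie subalgebra of g. Then the restriction of B_λ^g to s equals B_μ^s, i.e. the form (X,Y) ↦ Im(μ K_s(X,Y)) on s, where μ = Σ_{i=1}^n q_i λ_i and each q_i is a nonnegative rational number; moreover q_i ≠ 0 if and only if [s, g_i] ≠ 0. -/

import Mathlib

open Module

/-!
Every finite-dimensional module `M` over a simple Lie algebra `s` over an algebraically closed
field of characteristic zero has a trace form `q • K_s` with `q` a nonnegative rational, and `q = 0`
exactly when `s` acts trivially on `M`. Proportionality is Schur's lemma. Evaluating both forms at a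
coroot `h` gives the rationality and the sign of `q`: the weights of `M` take rational values at
`h`, so `tr_M (h²)` is a sum of rational squares. Finally, if the trace form vanishes then
`s = [s, s]` acts nilpotently on `M` by Cartan's criterion, hence trivially.

The theorem is the case `M = g_k`: since `[X_k, Y] = [X, Y]` for `Y ∈ g_k`, the form
`K_{g_k}(X_k, Y_k)` is the trace form of the `s`-module `g_k`.
-/

open LieAlgebra LieModule LieAlgebra.IsKilling

section PerfectLieAlgebra

variable {R L M : Type*} [CommRing R] [LieRing L] [LieAlgebra R L]
  [AddCommGroup M] [Module R M] [LieRingModule L M] [LieModule R L M]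

theorem lie_top_le_lie_top_lie_top_of_derivedSeries_one_eq_top (hL : derivedSeries R L 1 = ⊤)
    (N : LieSubmodule R L M) :
    ⁅(⊤ : LieIdeal R L), N⁆ ≤ ⁅(⊤ : LieIdeal R L), ⁅(⊤ : LieIdeal R L), N⁆⁆ := by
  have lie_lie_mem (x y : L) {m : M} (hm : m ∈ N) :
      ⁅x, ⁅y, m⁆⁆ ∈ ⁅(⊤ : LieIdeal R L), ⁅(⊤ : LieIdeal R L), N⁆⁆ :=
    LieSubmodule.lie_mem_lie trivial (LieSubmodule.lie_mem_lie trivial hm)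
  have hspan : Submodule.span R {z : L | ∃ x y : L, ⁅x, y⁆ = z} = ⊤ := by
    simpa [LieSubmodule.lieIdeal_oper_eq_linear_span'] using
      congrArg LieSubmodule.toSubmodule hL
  refine (LieSubmodule.lie_le_iff _ _ _).2 fun z _ m hm => ?_
  induction (hspan ▸ Submodule.mem_top : z ∈ Submodule.span R {z : L | ∃ x y : L, ⁅x, y⁆ = z})
    using Submodule.span_induction with
  | mem z hz =>
    obtain ⟨x, y, rfl⟩ := hz
    rw [lie_lie]
    exact sub_mem (lie_lie_mem x y hm) (lie_lie_mem y x hm)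
  | zero => simp
  | add z w _ _ hz hw => rw [add_lie]; exact add_mem (hz trivial) (hw trivial)
  | smul t z _ hz => rw [smul_lie]; exact Submodule.smul_mem _ t (hz trivial)

theorem isTrivial_of_isNilpotent_of_derivedSeries_one_eq_top (hL : derivedSeries R L 1 = ⊤)
    [LieModule.IsNilpotent L M] : IsTrivial L M := by
  have lcs_one_le (k : ℕ) :
      LieModule.lowerCentralSeries R L M 1 ≤ LieModule.lowerCentralSeries R L M (k + 1) := by
    induction k with
    | zero => exact le_rfl
    | succ k ih =>
      rw [LieModule.lowerCentralSeries_succ R L M (k + 1)]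
      exact (lie_top_le_lie_top_lie_top_of_derivedSeries_one_eq_top hL ⊤).trans
        (LieSubmodule.mono_lie_right ⊤ ih)
  obtain ⟨k, hk⟩ := (LieModule.isNilpotent_iff R L M).1 inferInstance
  have lcs_one : LieModule.lowerCentralSeries R L M 1 = ⊥ :=
    eq_bot_iff.2 <| (lcs_one_le k).trans <|
      (LieModule.antitone_lowerCentralSeries R L M k.le_succ).trans hk.le
  exact (trivial_iff_lower_central_eq_bot R L M).2 lcs_one

theorem traceForm_eq_zero_iff_isTrivial_of_derivedSeries_one_eq_top [CharZero R] [IsDomain R]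
    [IsNoetherian R M] [Module.Free R M] (hL : derivedSeries R L 1 = ⊤) :
    traceForm R L M = 0 ↔ IsTrivial L M := by
  refine ⟨fun h => ?_, fun _ => traceForm_eq_zero_of_isTrivial R L M⟩
  have hder := (LieModule.isNilpotent_iff_forall' (R := R)).1
    (isNilpotent_derivedSeries_of_traceForm_eq_zero h)
  have : LieModule.IsNilpotent L M :=
    (LieModule.isNilpotent_iff_forall' (R := R)).2 fun x => hder ⟨x, hL ▸ LieSubmodule.mem_top x⟩
  exact isTrivial_of_isNilpotent_of_derivedSeries_one_eq_top hL

theorem derivedSeries_one_eq_top_of_isSimple [IsSimple R L] : derivedSeries R L 1 = ⊤ := by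
  refine (IsSimple.eq_bot_or_eq_top _).resolve_left fun h => IsSimple.non_abelian R (L := L) ?_
  rw [← lie_abelian_iff_equiv_lie_abelian (LieIdeal.topEquiv (R := R) (L := L)),
    abelian_iff_derived_one_eq_bot]
  exact h

end PerfectLieAlgebra

section Schur

variable {K L M : Type*} [Field K] [IsAlgClosed K] [LieRing L] [LieAlgebra K L]
  [AddCommGroup M] [Module K M] [LieRingModule L M] [LieModule K L M] [FiniteDimensional K M]

theorem exists_eq_smul_of_lieInvariant [LieModule.IsIrreducible K L M]
    {Φ Ψ : LinearMap.BilinForm K M} (hΦ : Φ.Nondegenerate) (hΦ_inv : Φ.lieInvariant L)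
    (hΨ_inv : Ψ.lieInvariant L) : ∃ c : K, Ψ = c • Φ := by
  have := LieModule.nontrivial_of_isIrreducible K L M
  obtain ⟨c, hc⟩ := Module.End.exists_eigenvalue (Ψ.symmCompOfNondegenerate Φ hΦ)
  obtain ⟨v, hv⟩ := hc.exists_hasEigenvector
  let D : M →ₗ⁅K, L⁆ Dual K M :=
    { (Ψ - c • Φ : M →ₗ[K] Dual K M) with
      map_lie' := fun {x m} => by
        ext y
        simp [hΦ_inv x m y, hΨ_inv x m y] }
  have hvD : v ∈ D.ker := by
    rw [LieModuleHom.mem_ker]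
    ext y
    have hΨ : c * Φ v y = Ψ v y := by
      simpa [hv.apply_eq_smul] using Ψ.symmCompOfNondegenerate_left_apply hΦ y v
    exact sub_eq_zero.2 hΨ.symm
  have hD : D.ker = ⊤ := (IsSimpleOrder.eq_bot_or_eq_top D.ker).resolve_left fun h =>
    hv.2 <| (LieSubmodule.mem_bot v).1 (h ▸ hvD)
  refine ⟨c, sub_eq_zero.1 <| LinearMap.ext fun m => ?_⟩
  exact LieModuleHom.mem_ker.1 (hD ▸ LieSubmodule.mem_top m)

end Schur

section Coroot

variable {K L : Type*} [Field K] [CharZero K] [LieRing L] [LieAlgebra K L]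
  [FiniteDimensional K L] [IsKilling K L] {H : LieSubalgebra K L} [H.IsCartanSubalgebra]
  [IsTriangularizable K H L] {α : Weight K H L}

theorem killingForm_coroot_coroot_ne_zero (hα : α.IsNonZero) :
    killingForm K L (coroot α) (coroot α) ≠ 0 := by
  change traceForm K H L (coroot α) (coroot α) ≠ 0
  rw [traceForm_coroot, root_apply_coroot hα]
  simpa using root_apply_cartanEquivDual_symm_ne_zero hα

variable {M : Type*} [AddCommGroup M] [Module K M] [LieRingModule L M] [LieModule K L M]
  [FiniteDimensional K M]

theorem exists_rat_weight_coroot_eq (hα : α.IsNonZero) (χ : Weight K H M) :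
    ∃ r : ℚ, χ (coroot α) = r := by
  obtain ⟨a, b, hb, hab⟩ :=
    exists_forall_mem_corootSpace_smul_add_eq_zero M α χ hα χ.genWeightSpace_ne_bot
  have hsum : (a : K) * 2 + b * χ (coroot α) = 0 := by
    simpa [root_apply_coroot hα] using hab _ (coroot_mem_corootSpace α)
  refine ⟨-(a * 2) / b, ?_⟩
  have hb' : (b : K) ≠ 0 := by exact_mod_cast hb.ne'
  push_cast
  rw [eq_div_iff hb']
  linear_combination hsum

theorem exists_nonneg_rat_traceForm_coroot_coroot_eq [IsTriangularizable K H M]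
    (hα : α.IsNonZero) : ∃ r : ℚ, 0 ≤ r ∧ traceForm K L M (coroot α) (coroot α) = r := by
  choose r hr using exists_rat_weight_coroot_eq (M := M) hα
  refine ⟨∑ χ : Weight K H M, finrank K (genWeightSpace M χ) * (r χ * r χ),
    Finset.sum_nonneg fun χ _ => mul_nonneg (Nat.cast_nonneg _) (mul_self_nonneg _), ?_⟩
  change traceForm K H M (coroot α) (coroot α) = _
  rw [traceForm_eq_sum_finrank_nsmul_mul]
  push_cast
  simp only [hr, nsmul_eq_mul]

end Coroot

section SimpleLieAlgebra

variable {K S : Type*} [Field K] [CharZero K] [LieRing S] [LieAlgebra K S]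
  [FiniteDimensional K S] [IsSimple K S]

theorem exists_weight_isNonZero (H : LieSubalgebra K S) [H.IsCartanSubalgebra]
    [IsTriangularizable K H S] : ∃ α : Weight K H S, α.IsNonZero := by
  have : Nontrivial (Dual K H) := RootPairing.IsIrreducible.nontrivial (rootSystem H)
  by_contra! h
  have hspan := span_weight_isNonZero_eq_top K S H
  have hempty : {α : Weight K H S | α.IsNonZero} = ∅ :=
    Set.eq_empty_of_forall_notMem fun α hα => hα (h α)
  rw [hempty, Set.image_empty, Submodule.span_empty] at hspan
  exact bot_ne_top hspan

theorem exists_nonneg_rat_traceForm_eq_smul_killingForm [IsAlgClosed K] (M : Type*)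
    [AddCommGroup M] [Module K M] [LieRingModule S M] [LieModule K S M] [FiniteDimensional K M] :
    ∃ q : ℚ, 0 ≤ q ∧ traceForm K S M = (q : K) • killingForm K S ∧ (q ≠ 0 ↔ ¬ IsTrivial S M) := by
  obtain ⟨x, _⟩ := exists_isCartanSubalgebra_engel K S
  obtain ⟨α, hα⟩ := exists_weight_isNonZero (LieSubalgebra.engel K x)
  have hne := killingForm_coroot_coroot_ne_zero hα
  obtain ⟨c, hc⟩ := exists_eq_smul_of_lieInvariant (killingForm_nondegenerate K S)
    (traceForm_lieInvariant K S S) (traceForm_lieInvariant K S M)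
  obtain ⟨a, ha_nonneg, ha⟩ := exists_nonneg_rat_traceForm_coroot_coroot_eq (M := S) hα
  obtain ⟨b, hb_nonneg, hb⟩ := exists_nonneg_rat_traceForm_coroot_coroot_eq (M := M) hα
  have hc_rat : c = (b / a : ℚ) := by
    have h := LinearMap.congr_fun₂ hc (coroot α : S) (coroot α : S)
    rw [hb, LinearMap.smul_apply, LinearMap.smul_apply, smul_eq_mul] at h
    rw [Rat.cast_div, h, ← ha, mul_div_cancel_right₀ c hne]
  have hM : traceForm K S M = ((b / a : ℚ) : K) • killingForm K S := hc_rat ▸ hc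
  refine ⟨b / a, div_nonneg hb_nonneg ha_nonneg, hM, not_congr ?_⟩
  have hkilling : killingForm K S ≠ 0 := fun h => hne (by simp [h])
  rw [← traceForm_eq_zero_iff_isTrivial_of_derivedSeries_one_eq_top (R := K)
    derivedSeries_one_eq_top_of_isSimple, hM, smul_eq_zero_iff_left hkilling, Rat.cast_eq_zero]

end SimpleLieAlgebra

section IdealProjections

variable {R g ι : Type*} [CommRing R] [LieRing g] [LieAlgebra R g] [Fintype ι]
  {I : ι → LieIdeal R g} {π : ι → g →ₗ[R] g}
  (hmem : ∀ k x, π k x ∈ I k) (hsum : ∀ x : g, ∑ k, π k x = x)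
  (hzero : ∀ k l, k ≠ l → ∀ x ∈ I l, π k x = 0)

include hsum hzero in
theorem disjoint_of_projections {k l : ι} (hkl : k ≠ l) : Disjoint (I k) (I l) := by
  refine disjoint_iff_inf_le.2 fun x hx => ?_
  obtain ⟨hk, hl⟩ := hx
  rw [LieSubmodule.mem_bot, ← hsum x]
  refine Finset.sum_eq_zero fun j _ => ?_
  rcases eq_or_ne j k with rfl | hjk
  · exact hzero j l hkl x hl
  · exact hzero j k hjk x hk

include hmem hsum hzero in
theorem projection_lie_eq_lie (k : ι) (x : g) {y : g} (hy : y ∈ I k) : ⁅π k x, y⁆ = ⁅x, y⁆ := by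
  conv_rhs => rw [← hsum x, sum_lie]
  refine (Fintype.sum_eq_single (f := fun l => ⁅π l x, y⁆) k fun l hl => ?_).symm
  have hlk := LieSubmodule.lie_le_inf (I l) (I k) (LieSubmodule.lie_mem_lie (hmem l x) hy)
  simpa [(disjoint_of_projections hsum hzero hl).eq_bot] using hlk

include hsum hzero in
theorem killingForm_projection_eq_traceForm (k : ι) (x y : g) :
    killingForm R (I k) ⟨π k x, hmem k x⟩ ⟨π k y, hmem k y⟩ = traceForm R g (I k) x y := by
  have ad_projection (z : g) : ad R (I k) ⟨π k z, hmem k z⟩ = toEnd R g (I k) z := by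
    ext w
    exact projection_lie_eq_lie hmem hsum hzero k z w.2
  rw [killingForm_apply_apply, ad_projection, ad_projection, traceForm_apply_apply]

end IdealProjections

theorem restriction_of_Blam_to_simple_subalgebra_general {K g ι : Type*} [Field K] [CharZero K]
    [IsAlgClosed K] [LieRing g] [LieAlgebra K g] [Fintype ι]
    (I : ι → LieIdeal K g) [∀ k, Module.Finite K (I k)] (π : ι → g →ₗ[K] g)
    (hmem : ∀ k x, π k x ∈ I k) (hsum : ∀ x : g, ∑ k, π k x = x)
    (hzero : ∀ k l, k ≠ l → ∀ x ∈ I l, π k x = 0)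
    (s : LieSubalgebra K g) [Module.Finite K s] [IsSimple K s] :
    ∃ q : ι → ℚ, (∀ k, 0 ≤ q k) ∧
      (∀ (lam : ι → K) (X Y : s),
        ∑ k, lam k * killingForm K (I k) ⟨π k X, hmem k X⟩ ⟨π k Y, hmem k Y⟩ =
          (∑ k, (q k : K) * lam k) * killingForm K s X Y) ∧
      (∀ k, q k ≠ 0 ↔ ∃ x ∈ s, ∃ y ∈ I k, ⁅x, y⁆ ≠ (0 : g)) := by
  choose q hq_nonneg hq hq_ne using fun k =>
    exists_nonneg_rat_traceForm_eq_smul_killingForm (K := K) (S := s) (I k)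
  refine ⟨q, hq_nonneg, fun lam X Y => ?_, fun k => ?_⟩
  · have htrace (k : ι) : traceForm K g (I k) X Y = q k * killingForm K s X Y :=
      LinearMap.congr_fun₂ (hq k) X Y
    simp only [killingForm_projection_eq_traceForm hmem hsum hzero, htrace, Finset.sum_mul]
    exact Finset.sum_congr rfl fun k _ => by ring
  · have htrivial : IsTrivial s (I k) ↔ ∀ x ∈ s, ∀ y ∈ I k, ⁅x, y⁆ = (0 : g) :=
      ⟨fun h x hx y hy => congrArg Subtype.val (h.trivial ⟨x, hx⟩ ⟨y, hy⟩),
        fun h => ⟨fun x y => Subtype.ext (h x x.2 y y.2)⟩⟩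
    rw [hq_ne, htrivial]
    push Not
    rfl

/-- Lemma 1 (iii) of Delorme.
Let `g` be complex semisimple with simple ideals `I k` (projections `π k`), `λ : Fin n → ℂ`,
and let `s` be a complex simple Lie subalgebra of `g`.  The restriction of
`B_λ^g X Y = ∑ k, Im (λ k * K_{g_k}(X_k, Y_k))` to `s` equals `B_μ^s = Im (μ * K_s (·,·))`
where `μ = ∑ k, q k * λ k` with each `q k` a nonnegative rational, and `q k ≠ 0` iff
`[s, g_k] ≠ 0`. -/
theorem restriction_of_Blam_to_simple_subalgebra
    (g : Type*) [LieRing g] [LieAlgebra ℝ g] [LieAlgebra ℂ g] [IsScalarTower ℝ ℂ g]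
    [FiniteDimensional ℂ g] [LieAlgebra.IsSemisimple ℂ g]
    (n : ℕ) (I : Fin n → LieIdeal ℂ g) [∀ k, Module.Finite ℂ (I k)]
    (hsimple : ∀ k, LieAlgebra.IsSimple ℂ (I k))
    (hinj : Function.Injective I)
    (hall : ∀ J : LieIdeal ℂ g, LieAlgebra.IsSimple ℂ J → ∃ k, I k = J)
    (π : Fin n → (g →ₗ[ℂ] g))
    (hmem : ∀ k x, π k x ∈ I k)
    (hsum : ∀ x : g, ∑ k, π k x = x)
    (hproj : ∀ k, ∀ x ∈ I k, π k x = x)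
    (hzero : ∀ k l, k ≠ l → ∀ x ∈ I l, π k x = 0)
    (lam : Fin n → ℂ)
    (s : LieSubalgebra ℂ g) [Module.Finite ℂ s] (hs : LieAlgebra.IsSimple ℂ s) :
    ∃ q : Fin n → ℚ, (∀ k, 0 ≤ q k) ∧
      (∀ X Y : s,
        (∑ k, (lam k *
            killingForm ℂ (I k) ⟨π k (X : g), hmem k (X : g)⟩
              ⟨π k (Y : g), hmem k (Y : g)⟩).im) =
          ((∑ k, (q k : ℂ) * lam k) * killingForm ℂ s X Y).im) ∧
      (∀ k, q k ≠ 0 ↔ ∃ x ∈ s, ∃ y ∈ I k, ⁅x, y⁆ ≠ (0 : g)) := by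
  obtain ⟨q, hq_nonneg, hq, hq_ne⟩ :=
    restriction_of_Blam_to_simple_subalgebra_general I π hmem hsum hzero s
  exact ⟨q, hq_nonneg, fun X Y => by rw [← Complex.im_sum, hq], hq_ne⟩
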